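/- Let N be a matching in G that admits a 2-level witness. Then every (A'∪B')-complete matching in G'_N has weight at most 0; in particular, N is a popular matching in G. -/

import Mathlib

/-!
Many-to-many matchings with two-sided preferences, votes, and popularity,
following "Popular Matchings in the Many-to-Many Setting".
-/

/-- The vote of a vertex with rank function `r` (smaller rank = more preferred)
comparing two options, where `none` stands for `null` (ranked below everything). -/
def vote {β : Type*} [DecidableEq β] (r : β → ℕ) : Option β → Option β → ℤ
  | none, none => 0
  | some _, none => 1
  | none, some _ => -1
  | some x, some y => if x = y then 0 else if r x < r y then 1 else -1

/-- The common length `k` of the arrays compared in `δ_u(S₀,S₁)`: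
after padding the smaller of `S₀, S₁` with nulls and removing common elements. -/
def kOf {β : Type*} [DecidableEq β] (S₀ S₁ : Finset β) : ℕ :=
  max S₀.card S₁.card - (S₀ ∩ S₁).card

/-- `S₀ ∖ S₁`, viewed as an array of `Option`s padded with `none` (null) to length `k`. -/
noncomputable def padded {β : Type*} [DecidableEq β] (S₀ S₁ : Finset β) (k : ℕ) : List (Option β) :=
  ((S₀ \ S₁).toList.map some) ++ List.replicate (k - (S₀ \ S₁).card) none

/-- `δ_u(S₀,S₁)`: the minimum, over all permutations `σ` of `{1,…,k}`, of
`Σ_i vote_u(S'₀[i], S'₁[σ(i)])`. -/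
noncomputable def deltaSet {β : Type*} [DecidableEq β] (r : β → ℕ) (S₀ S₁ : Finset β) : ℤ :=
  Finset.univ.inf' ⟨1, Finset.mem_univ 1⟩ fun σ : Equiv.Perm (Fin (kOf S₀ S₁)) =>
    ∑ i : Fin (kOf S₀ S₁),
      vote r ((padded S₀ S₁ (kOf S₀ S₁)).getD (i : ℕ) none)
             ((padded S₁ S₀ (kOf S₀ S₁)).getD (σ i : ℕ) none)

/-- A bipartite instance `G = (A ∪ B, E)` with capacities `≥ 1` and strict
preferences of every vertex over its neighbors (given by injective-on-neighbors
rank functions; smaller rank = more preferred). -/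
structure PrefInstance (α β : Type*) [Fintype α] [Fintype β] [DecidableEq α] [DecidableEq β] where
  E : Finset (α × β)
  capA : α → ℕ
  capB : β → ℕ
  rankA : α → β → ℕ
  rankB : β → α → ℕ
  capA_pos : ∀ a, 1 ≤ capA a
  capB_pos : ∀ b, 1 ≤ capB b
  rankA_injOn : ∀ a, Set.InjOn (rankA a) {b | (a, b) ∈ E}
  rankB_injOn : ∀ b, Set.InjOn (rankB b) {a | (a, b) ∈ E}

namespace PrefInstance

variable {α β : Type*} [Fintype α] [Fintype β] [DecidableEq α] [DecidableEq β]

/-- `M(a)`: the set of `B`-vertices matched to `a` in `M`. -/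
def rowSet (M : Finset (α × β)) (a : α) : Finset β :=
  Finset.univ.filter fun b => (a, b) ∈ M

/-- `M(b)`: the set of `A`-vertices matched to `b` in `M`. -/
def colSet (M : Finset (α × β)) (b : β) : Finset α :=
  Finset.univ.filter fun a => (a, b) ∈ M

variable (I : PrefInstance α β)

/-- `M` is a matching in `G`: a subset of `E` respecting all capacities. -/
def IsMatching (M : Finset (α × β)) : Prop :=
  M ⊆ I.E ∧ (∀ a, (rowSet M a).card ≤ I.capA a) ∧ (∀ b, (colSet M b).card ≤ I.capB b)

/-- `Δ_a(M₀,M₁) = δ_a(M₀(a), M₁(a))` for `a ∈ A`. -/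
noncomputable def DeltaA (M₀ M₁ : Finset (α × β)) (a : α) : ℤ :=
  deltaSet (I.rankA a) (rowSet M₀ a) (rowSet M₁ a)

/-- `Δ_b(M₀,M₁) = δ_b(M₀(b), M₁(b))` for `b ∈ B`. -/
noncomputable def DeltaB (M₀ M₁ : Finset (α × β)) (b : β) : ℤ :=
  deltaSet (I.rankB b) (colSet M₀ b) (colSet M₁ b)

/-- `Δ(M₀,M₁) = Σ_{u ∈ A∪B} Δ_u(M₀,M₁)`. -/
noncomputable def Delta (M₀ M₁ : Finset (α × β)) : ℤ :=
  (∑ a, I.DeltaA M₀ M₁ a) + ∑ b, I.DeltaB M₀ M₁ b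

/-- `M` is a popular matching: `Δ(M,T) ≥ 0` against every matching `T`. -/
def Popular (M : Finset (α × β)) : Prop :=
  I.IsMatching M ∧ ∀ T, I.IsMatching T → 0 ≤ I.Delta M T

/-- `M` is a weakly popular matching: `Δ(T,M) ≤ 0` for every matching `T`. -/
def WeaklyPopular (M : Finset (α × β)) : Prop :=
  I.IsMatching M ∧ ∀ T, I.IsMatching T → I.Delta T M ≤ 0

/-- The edge `(a,b) ∈ E ∖ M` blocks `M`. -/
def Blocks (M : Finset (α × β)) (a : α) (b : β) : Prop :=
  (a, b) ∈ I.E ∧ (a, b) ∉ M ∧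
  ((rowSet M a).card < I.capA a ∨ ∃ b' ∈ rowSet M a, I.rankA a b < I.rankA a b') ∧
  ((colSet M b).card < I.capB b ∨ ∃ a' ∈ colSet M b, I.rankB b a < I.rankB b a')

/-- `M` is a pairwise-stable matching: no edge blocks it. -/
def Stable (M : Finset (α × β)) : Prop :=
  I.IsMatching M ∧ ∀ a b, ¬ I.Blocks M a b

end PrefInstance
namespace PrefInstance

variable {α β : Type*} [Fintype α] [Fintype β] [DecidableEq α] [DecidableEq β]
variable (I : PrefInstance α β)

/-- `A'`: the set of clones `a_i`, `1 ≤ i ≤ cap(a)`, of the vertices of `A`. -/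
abbrev CloneA := (a : α) × Fin (I.capA a)

/-- `B'`: the set of clones `b_j`, `1 ≤ j ≤ cap(b)`, of the vertices of `B`. -/
abbrev CloneB := (b : β) × Fin (I.capB b)

/-- `N'` is a realization of the matching `N` on the cloned vertex sets: a
(one-to-one) matching on `A' × B'` whose projection is a bijection onto `N`. -/
def IsRealization (N : Finset (α × β)) (N' : Finset (I.CloneA × I.CloneB)) : Prop :=
  (∀ e ∈ N', ∀ f ∈ N', e.1 = f.1 → e = f) ∧
  (∀ e ∈ N', ∀ f ∈ N', e.2 = f.2 → e = f) ∧
  N'.image (fun e => (e.1.1, e.2.1)) = N ∧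
  N'.card = N.card

/-- The partner of `x ∈ A'` in a one-to-one matching `N'` on clones (`none` if unmatched,
i.e. matched to the last resort `ℓ(x)` in `N*`). -/
noncomputable def partnerA (N' : Finset (I.CloneA × I.CloneB)) (x : I.CloneA) :
    Option I.CloneB :=
  if h : ∃ y, (x, y) ∈ N' then some h.choose else none

/-- The partner of `y ∈ B'` in a one-to-one matching `N'` on clones (`none` if unmatched). -/
noncomputable def partnerB (N' : Finset (I.CloneA × I.CloneB)) (y : I.CloneB) :
    Option I.CloneA :=
  if h : ∃ x, (x, y) ∈ N' then some h.choose else none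

/-- `(x, y) ∈ A' × B'` is an edge of the graph `G'_N`: either the underlying pair is an
edge of `E ∖ N` (all clone copies present), or `(x,y)` is the unique copy in `N'` of an
edge of `N`. -/
def GNEdge (N : Finset (α × β)) (N' : Finset (I.CloneA × I.CloneB))
    (x : I.CloneA) (y : I.CloneB) : Prop :=
  ((x.1, y.1) ∈ I.E ∧ (x.1, y.1) ∉ N) ∨ (x, y) ∈ N'

/-- The weight `wt_N(x,y) = vote_a(b, N*(a_i)) + vote_b(a, N*(b_j))` of an edge of `G'_N`
lying in `A' × B'` (a last-resort partner in `N*` is read as null). -/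
noncomputable def wtE (N' : Finset (I.CloneA × I.CloneB))
    (x : I.CloneA) (y : I.CloneB) : ℤ :=
  vote (I.rankA x.1) (some y.1) (Option.map Sigma.fst (I.partnerA N' x)) +
  vote (I.rankB y.1) (some x.1) (Option.map Sigma.fst (I.partnerB N' y))

/-- A one-to-one matching on the clone sets (each clone is in at most one edge).
Together with the implicit last-resort edges for unmatched clones, this represents
an `(A' ∪ B')`-complete matching in `G'_N`. -/
def IsCloneMatching (T' : Finset (I.CloneA × I.CloneB)) : Prop :=
  (∀ e ∈ T', ∀ f ∈ T', e.1 = f.1 → e = f) ∧ (∀ e ∈ T', ∀ f ∈ T', e.2 = f.2 → e = f)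

/-- The weight `wt_N` of the `(A' ∪ B')`-complete matching represented by `T'`:
the sum of the weights of its `A' × B'` edges plus, for every clone left unmatched
in `T'` (hence matched to its last resort), the weight `wt_N(v, ℓ(v))`, which is
`-1` if `v` is matched in `N'` and `0` otherwise. -/
noncomputable def wtTotal (N' T' : Finset (I.CloneA × I.CloneB)) : ℤ :=
  (∑ e ∈ T', I.wtE N' e.1 e.2) +
  (∑ x : I.CloneA,
    if ∀ y, (x, y) ∉ T' then (if ∃ y, (x, y) ∈ N' then (-1 : ℤ) else 0) else 0) +
  (∑ y : I.CloneB,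
    if ∀ x, (x, y) ∉ T' then (if ∃ x, (x, y) ∈ N' then (-1 : ℤ) else 0) else 0)

/-- A 2-level witness for `N` (with realization `N'`): partitions
`A' = A'₀ ∪ A'₁` and `B' = B'₀ ∪ B'₁` (encoded by level functions `lA, lB`, where
`true` means level 1) such that clones of `A'` unmatched in `N'` are in `A'₁`, clones
of `B'` unmatched in `N'` are in `B'₀`, `N' ⊆ (A'₀ × B'₀) ∪ (A'₁ × B'₁)`, every edge
of `G'_N` in `A'₁ × B'₀` has weight `-2`, and every edge of `G'_N` in
`(A'₀ × B'₀) ∪ (A'₁ × B'₁)` has weight `≤ 0`. -/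
def TwoLevelWitness (N : Finset (α × β)) (N' : Finset (I.CloneA × I.CloneB))
    (lA : I.CloneA → Bool) (lB : I.CloneB → Bool) : Prop :=
  (∀ x : I.CloneA, (∀ y, (x, y) ∉ N') → lA x = true) ∧
  (∀ y : I.CloneB, (∀ x, (x, y) ∉ N') → lB y = false) ∧
  (∀ e ∈ N', lA e.1 = lB e.2) ∧
  (∀ x y, I.GNEdge N N' x y → lA x = true → lB y = false → I.wtE N' x y = -2) ∧
  (∀ x y, I.GNEdge N N' x y → lA x = lB y → I.wtE N' x y ≤ 0)

end PrefInstance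

/-!
The weight bound is linear-programming duality. A clone unmatched in `N'` gets the dual value `0`;
a matched clone gets `1` if it lies in `A'₀ ∪ B'₁` and `-1` if it lies in `A'₁ ∪ B'₀`. The values at
the two ends of an edge of `N'` cancel, so all the values sum to `0`, while the witness conditions
make every edge of `G'_N`, last-resort edges included, weigh at most the sum of the dual values at
its ends.

For popularity, every matching `T` of `G` is lifted to a complete matching of `G'_N` of weight
exactly `-Δ(N,T)`. At each vertex `u` the clones are slots filled by `N(u)`. The elements of
`N(u) ∩ T(u)` keep their slots, and an optimal permutation in the definition of `δ_u(N(u),T(u))`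
tells into which slot each element of `T(u) ∖ N(u)` goes; elements compared with null go to empty
slots, of which there are enough by the capacity bound. Keeping common elements in place ensures
that an edge of `N ∩ T` is lifted to its copy in `N'`, the only one present in `G'_N`.
-/

section Vote

variable {β : Type*} [DecidableEq β]

theorem vote_self (r : β → ℕ) (x : Option β) : vote r x x = 0 := by
  cases x <;> simp [vote]

theorem vote_le_one (r : β → ℕ) (x y : Option β) : vote r x y ≤ 1 := by
  rcases x with _ | x <;> rcases y with _ | y <;> simp only [vote] <;> grind

theorem vote_none_left (r : β → ℕ) (y : Option β) :
    vote r none y = if y = none then 0 else -1 := by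
  cases y <;> simp [vote]

theorem vote_antisymm {r : β → ℕ} {x y : Option β}
    (hr : ∀ a ∈ x, ∀ b ∈ y, r a = r b → a = b) : vote r x y = -vote r y x := by
  rcases x with _ | a <;> rcases y with _ | b <;> simp only [vote] <;> grind

end Vote

theorem exists_embedding_comp_eq {ι κ γ : Type*} {u : κ → γ} {p : ι → γ}
    (h : ∀ z, Nonempty ({i // u i = z} ↪ {j // p j = z})) :
    ∃ f : κ ↪ ι, ∀ i, p (f i) = u i := by
  let fiberwise : (Σ z, {i // u i = z}) ↪ Σ z, {j // p j = z} :=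
    (Function.Embedding.refl γ).sigmaMap fun z => (h z).some
  exact ⟨(Equiv.sigmaFiberEquiv u).symm.toEmbedding.trans
    (fiberwise.trans (Equiv.sigmaFiberEquiv p).toEmbedding), fun i => ((h (u i)).some ⟨i, rfl⟩).2⟩

theorem dite_choose_eq_some_iff {γ : Type*} {P : γ → Prop} [Decidable (∃ z, P z)]
    (hP : ∀ z w, P z → P w → z = w) (z : γ) :
    (if h : ∃ z, P z then some h.choose else none) = some z ↔ P z := by
  split_ifs with h
  · rw [Option.some_inj]
    exact ⟨fun hz => hz ▸ h.choose_spec, hP _ _ h.choose_spec⟩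
  · exact iff_of_false (by simp) fun hz => h ⟨z, hz⟩

/-- `p` distributes the elements of `S` over the slots `ι`, one slot per element; a slot `i` with
`p i = none` is empty. -/
structure Fills {ι β : Type*} (p : ι → Option β) (S : Finset β) : Prop where
  eq_of_eq_some : ∀ {i j n}, p i = some n → p j = some n → i = j
  mem_iff : ∀ {n}, n ∈ S ↔ ∃ i, p i = some n

namespace Fills

variable {ι κ β : Type*} {p : ι → Option β} {S : Finset β}

theorem mem (hp : Fills p S) {i : ι} {n : β} (hi : p i = some n) : n ∈ S :=
  hp.mem_iff.2 ⟨i, hi⟩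

theorem comp_equiv (hp : Fills p S) (σ : κ ≃ ι) : Fills (p ∘ σ) S where
  eq_of_eq_some hi hj := σ.injective (hp.eq_of_eq_some hi hj)
  mem_iff := hp.mem_iff.trans (σ.exists_congr_right (q := fun i => p i = some _)).symm

theorem of_card_le {k : ℕ} (hk : S.card ≤ k) : Fills (fun i : Fin k => S.toList[(i : ℕ)]?) S where
  eq_of_eq_some hi hj := by
    have index_lt := (List.getElem?_eq_some_iff.1 hi).1
    exact Fin.ext ((List.getElem?_inj index_lt S.nodup_toList).1 (hi.trans hj.symm))
  mem_iff {n} := by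
    rw [← Finset.mem_toList, List.mem_iff_getElem?]
    refine ⟨fun ⟨i, hi⟩ => ?_, fun ⟨i, hi⟩ => ⟨i, hi⟩⟩
    have index_lt := (List.getElem?_eq_some_iff.1 hi).1.trans_eq S.length_toList
    exact ⟨⟨i, index_lt.trans_le hk⟩, hi⟩

theorem card_empty_add_card [Fintype ι] [Fintype {i // p i = none}] (hp : Fills p S) :
    Fintype.card {i // p i = none} + S.card = Fintype.card ι := by
  classical
  choose slot hslot using fun n : S => hp.mem_iff.1 n.2
  have slot_bijective : Function.Bijective fun n : S =>
      (⟨slot n, by simp [hslot]⟩ : {i // ¬ p i = none}) := by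
    refine ⟨fun m n hmn => Subtype.ext (Option.some_injective _ ?_), fun ⟨i, hi⟩ => ?_⟩
    · rw [← hslot m, ← hslot n, show slot m = slot n from congrArg Subtype.val hmn]
    · obtain ⟨n, hn⟩ := Option.ne_none_iff_exists'.1 hi
      exact ⟨⟨n, hp.mem hn⟩, Subtype.ext (hp.eq_of_eq_some (hslot _) hn)⟩
  rw [← Fintype.card_coe S, Fintype.card_of_bijective slot_bijective, ← Fintype.card_sum]
  exact Fintype.card_congr (Equiv.sumCompl _)

theorem exists_embedding [Fintype ι] [Fintype κ] (hp : Fills p S) {u : κ → Option β}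
    {D : Finset β} (hu : Fills u D) (hDS : D ⊆ S)
    (hcard : Fintype.card κ + S.card ≤ Fintype.card ι + D.card) :
    ∃ f : κ ↪ ι, ∀ i, p (f i) = u i := by
  classical
  refine exists_embedding_comp_eq fun z => ?_
  cases z with
  | none =>
    have := hp.card_empty_add_card
    have := hu.card_empty_add_card
    exact Function.Embedding.nonempty_of_card_le (by omega)
  | some n =>
    choose slot hslot using fun i : {i // u i = some n} => hp.mem_iff.1 (hDS (hu.mem i.2))
    exact ⟨fun i => ⟨slot i, hslot i⟩, fun i j _ => Subtype.ext (hu.eq_of_eq_some i.2 j.2)⟩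

section Refill

variable [DecidableEq β] {S₀ S₁ : Finset β} {u v : κ → Option β} {f : κ ↪ ι}

theorem extend_eq_of_mem (hu : Fills u (S₀ \ S₁)) (hf : ∀ i, p (f i) = u i) {j : ι} {n : β}
    (hn : n ∈ S₁) (hj : p j = some n) : Function.extend f v p j = some n := by
  rw [Function.extend_apply', hj]
  rintro ⟨i, rfl⟩
  exact (Finset.mem_sdiff.1 (hu.mem ((hf i).symm.trans hj))).2 hn

theorem extend_eq_some_iff (hp : Fills p S₀) (hu : Fills u (S₀ \ S₁))
    (hf : ∀ i, p (f i) = u i) {j : ι} {n : β} :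
    Function.extend f v p j = some n ↔
      (n ∈ S₁ ∧ p j = some n) ∨ ∃ i, f i = j ∧ v i = some n := by
  refine ⟨fun hj => ?_, ?_⟩
  · by_cases h : ∃ i, f i = j
    · obtain ⟨i, rfl⟩ := h
      exact Or.inr ⟨i, rfl, f.injective.extend_apply v p i ▸ hj⟩
    · rw [Function.extend_apply' _ _ _ h] at hj
      refine Or.inl ⟨by_contra fun hn => h ?_, hj⟩
      obtain ⟨i, hi⟩ := hu.mem_iff.1 (Finset.mem_sdiff.2 ⟨hp.mem hj, hn⟩)
      exact ⟨i, hp.eq_of_eq_some ((hf i).trans hi) hj⟩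
  · rintro (⟨hn, hj⟩ | ⟨i, rfl, hi⟩)
    · exact hu.extend_eq_of_mem hf hn hj
    · rw [f.injective.extend_apply, hi]

theorem extend (hp : Fills p S₀) (hu : Fills u (S₀ \ S₁)) (hv : Fills v (S₁ \ S₀))
    (hf : ∀ i, p (f i) = u i) : Fills (Function.extend f v p) S₁ where
  eq_of_eq_some {i j n} hi hj := by
    rw [hp.extend_eq_some_iff hu hf] at hi hj
    have not_mem {k} (hk : v k = some n) : n ∉ S₀ := (Finset.mem_sdiff.1 (hv.mem hk)).2
    rcases hi with ⟨-, hi⟩ | ⟨i', rfl, hi⟩ <;> rcases hj with ⟨-, hj⟩ | ⟨j', rfl, hj⟩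
    · exact hp.eq_of_eq_some hi hj
    · exact absurd (hp.mem hi) (not_mem hj)
    · exact absurd (hp.mem hj) (not_mem hi)
    · rw [hv.eq_of_eq_some hi hj]
  mem_iff {n} := by
    simp only [hp.extend_eq_some_iff hu hf]
    refine ⟨fun hn => ?_, ?_⟩
    · by_cases hn₀ : n ∈ S₀
      · obtain ⟨j, hj⟩ := hp.mem_iff.1 hn₀
        exact ⟨j, Or.inl ⟨hn, hj⟩⟩
      · obtain ⟨i, hi⟩ := hv.mem_iff.1 (Finset.mem_sdiff.2 ⟨hn, hn₀⟩)
        exact ⟨f i, Or.inr ⟨i, rfl, hi⟩⟩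
    · rintro ⟨j, ⟨hn, -⟩ | ⟨i, -, hi⟩⟩
      · exact hn
      · exact (Finset.mem_sdiff.1 (hv.mem hi)).1

end Refill

end Fills

theorem sum_vote_extend {ι κ β : Type*} [Fintype ι] [Fintype κ] [DecidableEq β] (r : β → ℕ)
    (p : ι → Option β) (v : κ → Option β) (f : κ ↪ ι) :
    ∑ j, vote r (Function.extend f v p j) (p j) = ∑ i, vote r (v i) (p (f i)) := by
  refine (Fintype.sum_of_injective f f.injective _ _ (fun j hj => ?_) fun i => ?_).symm
  · rw [Function.extend_apply' _ _ _ hj, vote_self]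
  · rw [f.injective.extend_apply]

section DeltaSet

variable {β : Type*} [DecidableEq β]

theorem padded_getD (S₀ S₁ : Finset β) (k i : ℕ) :
    (padded S₀ S₁ k).getD i none = (S₀ \ S₁).toList[i]? := by
  rw [padded, List.getD_eq_getElem?_getD, List.getElem?_append]
  split_ifs with hi
  · rw [List.length_map] at hi
    simp [List.getElem?_eq_getElem hi]
  · rw [List.length_map, not_lt] at hi
    rw [List.getElem?_eq_none hi, List.getElem?_replicate]
    split_ifs <;> rfl

theorem kOf_comm (S₀ S₁ : Finset β) : kOf S₀ S₁ = kOf S₁ S₀ := by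
  rw [kOf, kOf, max_comm, Finset.inter_comm]

theorem card_sdiff_le_kOf (S₀ S₁ : Finset β) : (S₀ \ S₁).card ≤ kOf S₀ S₁ := by
  rw [kOf, Finset.card_sdiff, Finset.inter_comm]
  exact Nat.sub_le_sub_right (le_max_left _ _) _

theorem exists_fills_deltaSet_eq (r : β → ℕ) (S₀ S₁ : Finset β) :
    ∃ u v : Fin (kOf S₀ S₁) → Option β, Fills u (S₀ \ S₁) ∧ Fills v (S₁ \ S₀) ∧
      deltaSet r S₀ S₁ = ∑ i, vote r (u i) (v i) := by
  obtain ⟨σ, -, hσ⟩ := Finset.exists_mem_eq_inf' (s := Finset.univ) ⟨1, Finset.mem_univ 1⟩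
    fun σ : Equiv.Perm (Fin (kOf S₀ S₁)) => ∑ i : Fin (kOf S₀ S₁),
      vote r (S₀ \ S₁).toList[(i : ℕ)]? (S₁ \ S₀).toList[(σ i : ℕ)]?
  have card_le : (S₁ \ S₀).card ≤ kOf S₀ S₁ := kOf_comm S₁ S₀ ▸ card_sdiff_le_kOf S₁ S₀
  refine ⟨fun i => (S₀ \ S₁).toList[(i : ℕ)]?, fun i => (S₁ \ S₀).toList[(σ i : ℕ)]?,
    Fills.of_card_le (card_sdiff_le_kOf S₀ S₁), (Fills.of_card_le card_le).comp_equiv σ, ?_⟩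
  simp only [deltaSet, padded_getD]
  exact hσ

theorem Fills.exists_refill {ι : Type*} [Fintype ι] {r : β → ℕ} {S₀ S₁ : Finset β}
    (hr : Set.InjOn r (S₀ ∪ S₁)) {p : ι → Option β} (hp : Fills p S₀)
    (hcard : S₁.card ≤ Fintype.card ι) :
    ∃ q : ι → Option β, Fills q S₁ ∧ (∀ i, ∀ n ∈ S₁, p i = some n → q i = some n) ∧
      ∑ i, vote r (q i) (p i) = -deltaSet r S₀ S₁ := by
  classical
  obtain ⟨u, v, hu, hv, hδ⟩ := exists_fills_deltaSet_eq r S₀ S₁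
  have enough_slots :
      Fintype.card (Fin (kOf S₀ S₁)) + S₀.card ≤ Fintype.card ι + (S₀ \ S₁).card := by
    have := hp.card_empty_add_card
    have := Finset.card_sdiff_add_card_inter S₀ S₁
    rw [Fintype.card_fin, kOf]
    omega
  obtain ⟨f, hf⟩ := hp.exists_embedding hu Finset.sdiff_subset enough_slots
  refine ⟨Function.extend f v p, hp.extend hu hv hf,
    fun _ _ hn hi => hu.extend_eq_of_mem hf hn hi, ?_⟩
  rw [sum_vote_extend, hδ, ← Finset.sum_neg_distrib]
  refine Finset.sum_congr rfl fun i _ => ?_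
  rw [hf]
  exact vote_antisymm fun a ha b hb =>
    hr (Or.inr (Finset.mem_sdiff.1 (hv.mem ha)).1) (Or.inl (Finset.mem_sdiff.1 (hu.mem hb)).1)

end DeltaSet

theorem sum_comp_add_sum_ite_notMem_image {ι κ M : Type*} [Fintype κ] [DecidableEq κ]
    [AddCommMonoid M] {T : Finset ι} {f : ι → κ} (hf : Set.InjOn f T) {P : κ → Prop}
    [DecidablePred P] (hP : ∀ x, P x ↔ x ∉ T.image f) (g : κ → M) :
    ∑ e ∈ T, g (f e) + ∑ x, (if P x then g x else 0) = ∑ x, g x := by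
  rw [← Finset.sum_image hf, ← Finset.sum_filter, ← Finset.sum_add_sum_compl (T.image f)]
  congr 2
  ext x
  simp [hP]

namespace PrefInstance

theorem mem_rowSet {α β : Type*} [Fintype β] [DecidableEq α] [DecidableEq β]
    {M : Finset (α × β)} {a : α} {b : β} : b ∈ rowSet M a ↔ (a, b) ∈ M := by
  simp [rowSet]

theorem mem_colSet {α β : Type*} [Fintype α] [DecidableEq α] [DecidableEq β]
    {M : Finset (α × β)} {a : α} {b : β} : a ∈ colSet M b ↔ (a, b) ∈ M := by
  simp [colSet]

variable {α β : Type*} [Fintype α] [Fintype β] [DecidableEq α] [DecidableEq β]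
variable {I : PrefInstance α β} {N T : Finset (α × β)} {N' T' : Finset (I.CloneA × I.CloneB)}

/-- The vertex of `B` to whose clone `x ∈ A'` is matched in `N'`, with `none` for the last
resort. -/
noncomputable def mateA (N' : Finset (I.CloneA × I.CloneB)) (x : I.CloneA) : Option β :=
  (I.partnerA N' x).map Sigma.fst

/-- The vertex of `A` to whose clone `y ∈ B'` is matched in `N'`, with `none` for the last
resort. -/
noncomputable def mateB (N' : Finset (I.CloneA × I.CloneB)) (y : I.CloneB) : Option α :=
  (I.partnerB N' y).map Sigma.fst

theorem mateA_eq_none_iff {x : I.CloneA} : mateA N' x = none ↔ ∀ y, (x, y) ∉ N' := by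
  rw [mateA, Option.map_eq_none_iff, partnerA]
  simp only [dite_eq_right_iff, reduceCtorEq, imp_false, not_exists]

theorem mateB_eq_none_iff {y : I.CloneB} : mateB N' y = none ↔ ∀ x, (x, y) ∉ N' := by
  rw [mateB, Option.map_eq_none_iff, partnerB]
  simp only [dite_eq_right_iff, reduceCtorEq, imp_false, not_exists]

namespace IsCloneMatching

theorem injOn_fst (h : I.IsCloneMatching T') :
    Set.InjOn Prod.fst (T' : Set (I.CloneA × I.CloneB)) :=
  fun e he f hf => h.1 e he f hf

theorem injOn_snd (h : I.IsCloneMatching T') :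
    Set.InjOn Prod.snd (T' : Set (I.CloneA × I.CloneB)) :=
  fun e he f hf => h.2 e he f hf

theorem mateA_eq_some_iff (h : I.IsCloneMatching T') {x : I.CloneA} {b : β} :
    mateA T' x = some b ↔ ∃ j, (x, ⟨b, j⟩) ∈ T' := by
  have partner_iff (y) : I.partnerA T' x = some y ↔ (x, y) ∈ T' :=
    dite_choose_eq_some_iff (P := fun y => (x, y) ∈ T')
      (fun _ _ hz hw => congrArg Prod.snd (h.1 _ hz _ hw rfl)) y
  simp [mateA, partner_iff, Sigma.exists]

theorem mateB_eq_some_iff (h : I.IsCloneMatching T') {y : I.CloneB} {a : α} :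
    mateB T' y = some a ↔ ∃ i, (⟨a, i⟩, y) ∈ T' := by
  have partner_iff (x) : I.partnerB T' y = some x ↔ (x, y) ∈ T' :=
    dite_choose_eq_some_iff (P := fun x => (x, y) ∈ T')
      (fun _ _ hz hw => congrArg Prod.fst (h.2 _ hz _ hw rfl)) x
  simp [mateB, partner_iff, Sigma.exists]

theorem sum_fst_add_sum_unmatched {M : Type*} [AddCommMonoid M] (h : I.IsCloneMatching T')
    (g : I.CloneA → M) :
    ∑ e ∈ T', g e.1 + ∑ x, (if ∀ y, (x, y) ∉ T' then g x else 0) = ∑ x, g x :=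
  sum_comp_add_sum_ite_notMem_image h.injOn_fst (by simp [Sigma.forall]) g

theorem sum_snd_add_sum_unmatched {M : Type*} [AddCommMonoid M] (h : I.IsCloneMatching T')
    (g : I.CloneB → M) :
    ∑ e ∈ T', g e.2 + ∑ y, (if ∀ x, (x, y) ∉ T' then g y else 0) = ∑ y, g y :=
  sum_comp_add_sum_ite_notMem_image h.injOn_snd (by simp [Sigma.forall]) g

end IsCloneMatching

theorem wtE_le_two (N' : Finset (I.CloneA × I.CloneB)) (x : I.CloneA) (y : I.CloneB) :
    I.wtE N' x y ≤ 2 :=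
  add_le_add (vote_le_one _ _ _) (vote_le_one _ _ _)

theorem wtTotal_le_sum_dual (hT' : I.IsCloneMatching T') {dA : I.CloneA → ℤ} {dB : I.CloneB → ℤ}
    (edge_le : ∀ e ∈ T', I.wtE N' e.1 e.2 ≤ dA e.1 + dB e.2)
    (last_le_A : ∀ x, (if ∃ y, (x, y) ∈ N' then -1 else 0) ≤ dA x)
    (last_le_B : ∀ y, (if ∃ x, (x, y) ∈ N' then -1 else 0) ≤ dB y) :
    I.wtTotal N' T' ≤ ∑ x, dA x + ∑ y, dB y := by
  rw [← hT'.sum_fst_add_sum_unmatched dA, ← hT'.sum_snd_add_sum_unmatched dB, add_add_add_comm,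
    ← Finset.sum_add_distrib, ← add_assoc, wtTotal]
  gcongr with e he x _ y _
  · exact edge_le e he
  · split
    exacts [last_le_A x, le_rfl]
  · split
    exacts [last_le_B y, le_rfl]

/-- The dual value of a clone: `matched` says that the clone is matched in `N'`, and `high` that it
lies in `A'₀ ∪ B'₁`. -/
def dualValue (matched : Prop) [Decidable matched] (high : Bool) : ℤ :=
  if matched then (if high then 1 else -1) else 0

theorem last_resort_le_dualValue (matched : Prop) [Decidable matched] (high : Bool) :
    (if matched then -1 else 0) ≤ dualValue matched high := by
  unfold dualValue
  split_ifs <;> simp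

theorem neg_one_le_dualValue (matched : Prop) [Decidable matched] (high : Bool) :
    -1 ≤ dualValue matched high := by
  unfold dualValue
  split_ifs <;> simp

theorem sum_dualValue_eq_zero (hN' : I.IsCloneMatching N') {lA : I.CloneA → Bool}
    {lB : I.CloneB → Bool} (same_level : ∀ e ∈ N', lA e.1 = lB e.2) :
    ∑ x, dualValue (∃ y, (x, y) ∈ N') (!lA x) + ∑ y, dualValue (∃ x, (x, y) ∈ N') (lB y) = 0 := by
  have unmatched_A (x : I.CloneA) :
      (if ∀ y, (x, y) ∉ N' then dualValue (∃ y, (x, y) ∈ N') (!lA x) else 0) = 0 := by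
    simp +contextual [dualValue]
  have unmatched_B (y : I.CloneB) :
      (if ∀ x, (x, y) ∉ N' then dualValue (∃ x, (x, y) ∈ N') (lB y) else 0) = 0 := by
    simp +contextual [dualValue]
  rw [← hN'.sum_fst_add_sum_unmatched, ← hN'.sum_snd_add_sum_unmatched,
    Fintype.sum_congr _ _ unmatched_A, Fintype.sum_congr _ _ unmatched_B]
  simp only [Finset.sum_const_zero, add_zero, ← Finset.sum_add_distrib]
  refine Finset.sum_eq_zero fun e he => ?_
  have matched_fst : ∃ y, (e.1, y) ∈ N' := ⟨e.2, he⟩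
  have matched_snd : ∃ x, (x, e.2) ∈ N' := ⟨e.1, he⟩
  cases h : lB e.2 <;> simp [dualValue, matched_fst, matched_snd, same_level e he, h]

theorem TwoLevelWitness.wtE_le_dualValue {lA : I.CloneA → Bool} {lB : I.CloneB → Bool}
    (hW : I.TwoLevelWitness N N' lA lB) {x : I.CloneA} {y : I.CloneB} (hxy : I.GNEdge N N' x y) :
    I.wtE N' x y ≤
      dualValue (∃ y, (x, y) ∈ N') (!lA x) + dualValue (∃ x, (x, y) ∈ N') (lB y) := by
  obtain ⟨unmatched_A, unmatched_B, -, wtE_eq_neg_two, wtE_nonpos⟩ := hW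
  have dualA_ge := neg_one_le_dualValue (∃ y, (x, y) ∈ N') (!lA x)
  have dualB_ge := neg_one_le_dualValue (∃ x, (x, y) ∈ N') (lB y)
  have dualA_eq (hx : lA x = false) : dualValue (∃ y, (x, y) ∈ N') (!lA x) = 1 := by
    have : ∃ y, (x, y) ∈ N' := by
      by_contra! h
      simp [unmatched_A x h] at hx
    simp [dualValue, this, hx]
  have dualB_eq (hy : lB y = true) : dualValue (∃ x, (x, y) ∈ N') (lB y) = 1 := by
    have : ∃ x, (x, y) ∈ N' := by
      by_contra! h
      simp [unmatched_B y h] at hy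
    simp [dualValue, this, hy]
  have wtE_le := wtE_le_two N' x y
  rcases (lA x).eq_false_or_eq_true with hx | hx <;>
    rcases (lB y).eq_false_or_eq_true with hy | hy
  · linarith [wtE_nonpos x y hxy (hx.trans hy.symm), dualB_eq hy]
  · linarith [wtE_eq_neg_two x y hxy hx hy]
  · linarith [dualA_eq hx, dualB_eq hy]
  · linarith [wtE_nonpos x y hxy (hx.trans hy.symm), dualA_eq hx]

theorem TwoLevelWitness.wtTotal_nonpos {lA : I.CloneA → Bool} {lB : I.CloneB → Bool}
    (hW : I.TwoLevelWitness N N' lA lB) (hN' : I.IsCloneMatching N') (hT' : I.IsCloneMatching T')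
    (hG : ∀ e ∈ T', I.GNEdge N N' e.1 e.2) : I.wtTotal N' T' ≤ 0 :=
  (wtTotal_le_sum_dual hT' (fun e he => hW.wtE_le_dualValue (hG e he))
    (fun _ => last_resort_le_dualValue _ _) fun _ => last_resort_le_dualValue _ _).trans_eq
    (sum_dualValue_eq_zero hN' hW.2.2.1)

theorem IsCloneMatching.wtTotal_eq_sum_vote (hT' : I.IsCloneMatching T')
    (N' : Finset (I.CloneA × I.CloneB)) :
    I.wtTotal N' T' = ∑ x, vote (I.rankA x.1) (mateA T' x) (mateA N' x) +
      ∑ y, vote (I.rankB y.1) (mateB T' y) (mateB N' y) := by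
  have last_A (x : I.CloneA) (hx : ∀ y, (x, y) ∉ T') :
      (if ∃ y, (x, y) ∈ N' then -1 else 0) =
        vote (I.rankA x.1) (mateA T' x) (mateA N' x) := by
    rw [mateA_eq_none_iff.2 hx, vote_none_left]
    simp only [mateA_eq_none_iff, ← not_exists, ite_not]
  have last_B (y : I.CloneB) (hy : ∀ x, (x, y) ∉ T') :
      (if ∃ x, (x, y) ∈ N' then -1 else 0) =
        vote (I.rankB y.1) (mateB T' y) (mateB N' y) := by
    rw [mateB_eq_none_iff.2 hy, vote_none_left]
    simp only [mateB_eq_none_iff, ← not_exists, ite_not]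
  rw [← hT'.sum_fst_add_sum_unmatched, ← hT'.sum_snd_add_sum_unmatched, add_add_add_comm,
    ← Finset.sum_add_distrib, ← add_assoc, wtTotal]
  congr 1
  · congr 1
    · refine Finset.sum_congr rfl fun e he => ?_
      rw [hT'.mateA_eq_some_iff.2 ⟨e.2.2, he⟩, hT'.mateB_eq_some_iff.2 ⟨e.1.2, he⟩]
      rfl
    · exact Finset.sum_congr rfl fun x _ => ite_congr rfl (last_A x) fun _ => rfl
  · exact Finset.sum_congr rfl fun y _ => ite_congr rfl (last_B y) fun _ => rfl

namespace IsRealization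

theorem isCloneMatching (h : I.IsRealization N N') : I.IsCloneMatching N' :=
  ⟨h.1, h.2.1⟩

theorem mem_iff (h : I.IsRealization N N') {a : α} {b : β} :
    (a, b) ∈ N ↔ ∃ i j, (⟨a, i⟩, ⟨b, j⟩) ∈ N' := by
  rw [← h.2.2.1]
  constructor
  · intro hab
    obtain ⟨⟨⟨a', i⟩, ⟨b', j⟩⟩, he, heq⟩ := Finset.mem_image.1 hab
    obtain ⟨rfl, rfl⟩ := Prod.mk.inj heq
    exact ⟨i, j, he⟩
  · rintro ⟨i, j, he⟩
    exact Finset.mem_image_of_mem _ he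

theorem injOn_proj (h : I.IsRealization N N') :
    Set.InjOn (fun e : I.CloneA × I.CloneB => (e.1.1, e.2.1)) N' :=
  Finset.card_image_iff.1 (by rw [h.2.2.1, h.2.2.2])

theorem fills_mateA (h : I.IsRealization N N') (a : α) :
    Fills (fun i => mateA N' ⟨a, i⟩) (rowSet N a) where
  eq_of_eq_some {i j b} hi hj := by
    obtain ⟨k, hk⟩ := h.isCloneMatching.mateA_eq_some_iff.1 hi
    obtain ⟨l, hl⟩ := h.isCloneMatching.mateA_eq_some_iff.1 hj
    simpa using congrArg Prod.fst (h.injOn_proj hk hl rfl)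
  mem_iff := by
    simp only [mem_rowSet, h.mem_iff, h.isCloneMatching.mateA_eq_some_iff, implies_true]

theorem fills_mateB (h : I.IsRealization N N') (b : β) :
    Fills (fun j => mateB N' ⟨b, j⟩) (colSet N b) where
  eq_of_eq_some {i j a} hi hj := by
    obtain ⟨k, hk⟩ := h.isCloneMatching.mateB_eq_some_iff.1 hi
    obtain ⟨l, hl⟩ := h.isCloneMatching.mateB_eq_some_iff.1 hj
    simpa using congrArg Prod.snd (h.injOn_proj hk hl rfl)
  mem_iff := by
    simp only [mem_colSet, h.mem_iff, h.isCloneMatching.mateB_eq_some_iff]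
    exact exists_comm

theorem gNEdge_of_mem (hN' : I.IsRealization N N') (hT' : I.IsRealization T T') (hTE : T ⊆ I.E)
    (keep : ∀ e ∈ N', (e.1.1, e.2.1) ∈ T → e ∈ T') {e : I.CloneA × I.CloneB} (he : e ∈ T') :
    I.GNEdge N N' e.1 e.2 := by
  have proj_mem_T : (e.1.1, e.2.1) ∈ T := hT'.mem_iff.2 ⟨_, _, he⟩
  by_cases proj_mem_N : (e.1.1, e.2.1) ∈ N
  · obtain ⟨i, j, hij⟩ := hN'.mem_iff.1 proj_mem_N
    exact Or.inr (hT'.injOn_proj (keep _ hij proj_mem_T) he rfl ▸ hij)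
  · exact Or.inl ⟨hTE proj_mem_T, proj_mem_N⟩

end IsRealization

section OfSlots

/-- The clone matching that joins `a_i` to `b_j` when `b` sits in slot `i` of `a` and `a` sits in
slot `j` of `b`. -/
def ofSlots (qA : ∀ a, Fin (I.capA a) → Option β) (qB : ∀ b, Fin (I.capB b) → Option α) :
    Finset (I.CloneA × I.CloneB) :=
  Finset.univ.filter fun e => qA e.1.1 e.1.2 = some e.2.1 ∧ qB e.2.1 e.2.2 = some e.1.1

variable {qA : ∀ a, Fin (I.capA a) → Option β} {qB : ∀ b, Fin (I.capB b) → Option α}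

theorem mem_ofSlots {x : I.CloneA} {y : I.CloneB} :
    (x, y) ∈ ofSlots qA qB ↔ qA x.1 x.2 = some y.1 ∧ qB y.1 y.2 = some x.1 := by
  simp [ofSlots]

theorem isRealization_ofSlots (hA : ∀ a, Fills (qA a) (rowSet T a))
    (hB : ∀ b, Fills (qB b) (colSet T b)) : I.IsRealization T (ofSlots qA qB) := by
  have injOn_proj : Set.InjOn (fun e : I.CloneA × I.CloneB => (e.1.1, e.2.1))
      (ofSlots qA qB : Set (I.CloneA × I.CloneB)) := by
    rintro ⟨⟨a, i⟩, ⟨b, j⟩⟩ he ⟨⟨a', i'⟩, ⟨b', j'⟩⟩ hf hef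
    obtain ⟨rfl, rfl⟩ : a = a' ∧ b = b' := Prod.mk.inj hef
    rw [Finset.mem_coe, mem_ofSlots] at he hf
    obtain rfl : i = i' := (hA a).eq_of_eq_some he.1 hf.1
    obtain rfl : j = j' := (hB b).eq_of_eq_some he.2 hf.2
    rfl
  have image_proj : (ofSlots qA qB).image (fun e => (e.1.1, e.2.1)) = T := by
    ext ⟨a, b⟩
    rw [Finset.mem_image]
    constructor
    · rintro ⟨⟨x, y⟩, he, heq⟩
      exact heq ▸ mem_rowSet.1 ((hA x.1).mem (mem_ofSlots.1 he).1)
    · intro hab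
      obtain ⟨i, hi⟩ := (hA a).mem_iff.1 (mem_rowSet.2 hab)
      obtain ⟨j, hj⟩ := (hB b).mem_iff.1 (mem_colSet.2 hab)
      exact ⟨(⟨a, i⟩, ⟨b, j⟩), mem_ofSlots.2 ⟨hi, hj⟩, rfl⟩
  refine ⟨?_, ?_, image_proj, image_proj ▸ (Finset.card_image_of_injOn injOn_proj).symm⟩
  · rintro ⟨x, y⟩ he ⟨_, y'⟩ hf rfl
    have same_b : y.1 = y'.1 :=
      Option.some_injective _ ((mem_ofSlots.1 he).1.symm.trans (mem_ofSlots.1 hf).1)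
    exact injOn_proj he hf (Prod.ext rfl same_b)
  · rintro ⟨x, y⟩ he ⟨x', _⟩ hf rfl
    have same_a : x.1 = x'.1 :=
      Option.some_injective _ ((mem_ofSlots.1 he).2.symm.trans (mem_ofSlots.1 hf).2)
    exact injOn_proj he hf (Prod.ext same_a rfl)

theorem mateA_ofSlots (hA : ∀ a, Fills (qA a) (rowSet T a))
    (hB : ∀ b, Fills (qB b) (colSet T b)) (x : I.CloneA) :
    mateA (ofSlots qA qB) x = qA x.1 x.2 := by
  ext b
  rw [(isRealization_ofSlots hA hB).isCloneMatching.mateA_eq_some_iff]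
  simp only [mem_ofSlots, exists_and_left, and_iff_left_iff_imp]
  intro hb
  exact (hB b).mem_iff.1 (mem_colSet.2 (mem_rowSet.1 ((hA x.1).mem hb)))

theorem mateB_ofSlots (hA : ∀ a, Fills (qA a) (rowSet T a))
    (hB : ∀ b, Fills (qB b) (colSet T b)) (y : I.CloneB) :
    mateB (ofSlots qA qB) y = qB y.1 y.2 := by
  ext a
  rw [(isRealization_ofSlots hA hB).isCloneMatching.mateB_eq_some_iff]
  simp only [mem_ofSlots, exists_and_right, and_iff_right_iff_imp]
  intro ha
  exact (hA a).mem_iff.1 (mem_rowSet.2 (mem_colSet.1 ((hB y.1).mem ha)))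

end OfSlots

theorem IsRealization.exists_lift (hN' : I.IsRealization N N') (hNE : N ⊆ I.E)
    (hT : I.IsMatching T) :
    ∃ T', I.IsRealization T T' ∧ (∀ e ∈ N', (e.1.1, e.2.1) ∈ T → e ∈ T') ∧
      I.wtTotal N' T' = -I.Delta N T := by
  have injOn_rankA (a : α) : Set.InjOn (I.rankA a) (rowSet N a ∪ rowSet T a) :=
    (I.rankA_injOn a).mono (Set.union_subset (fun _ hb => hNE (mem_rowSet.1 hb))
      fun _ hb => hT.1 (mem_rowSet.1 hb))
  have injOn_rankB (b : β) : Set.InjOn (I.rankB b) (colSet N b ∪ colSet T b) :=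
    (I.rankB_injOn b).mono (Set.union_subset (fun _ ha => hNE (mem_colSet.1 ha))
      fun _ ha => hT.1 (mem_colSet.1 ha))
  choose qA fillsA keepA sum_voteA using fun a =>
    (hN'.fills_mateA a).exists_refill (injOn_rankA a) (by simpa using hT.2.1 a)
  choose qB fillsB keepB sum_voteB using fun b =>
    (hN'.fills_mateB b).exists_refill (injOn_rankB b) (by simpa using hT.2.2 b)
  have hT' := isRealization_ofSlots fillsA fillsB
  refine ⟨ofSlots qA qB, hT', fun e he heT => mem_ofSlots.2 ⟨?_, ?_⟩, ?_⟩
  · exact keepA _ _ _ (mem_rowSet.2 heT) (hN'.isCloneMatching.mateA_eq_some_iff.2 ⟨_, he⟩)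
  · exact keepB _ _ _ (mem_colSet.2 heT) (hN'.isCloneMatching.mateB_eq_some_iff.2 ⟨_, he⟩)
  · simp only [hT'.isCloneMatching.wtTotal_eq_sum_vote, mateA_ofSlots fillsA fillsB,
      mateB_ofSlots fillsA fillsB, Fintype.sum_sigma, sum_voteA, sum_voteB,
      Finset.sum_neg_distrib, Delta, DeltaA, DeltaB, neg_add]

theorem popular_of_wtTotal_nonpos (hN : I.IsMatching N) (hN' : I.IsRealization N N')
    (nonpos : ∀ T', I.IsCloneMatching T' → (∀ e ∈ T', I.GNEdge N N' e.1 e.2) →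
      I.wtTotal N' T' ≤ 0) : I.Popular N := by
  refine ⟨hN, fun T hT => ?_⟩
  obtain ⟨T', hT', keep, wtTotal_eq⟩ := hN'.exists_lift hN.1 hT
  rw [← neg_nonpos, ← wtTotal_eq]
  exact nonpos T' hT'.isCloneMatching fun _ => hN'.gNEdge_of_mem hT' hT.1 keep

end PrefInstance

/-- Let `N` be a matching in `G` (with realization `N'`) that admits a
2-level witness. Then every `(A' ∪ B')`-complete matching in `G'_N` has weight at most
0; in particular, `N` is a popular matching in `G`. -/
theorem statement7 {α β : Type*} [Fintype α] [Fintype β] [DecidableEq α] [DecidableEq β]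
    (I : PrefInstance α β) (N : Finset (α × β)) (hN : I.IsMatching N)
    (N' : Finset (I.CloneA × I.CloneB)) (hN' : I.IsRealization N N')
    (lA : I.CloneA → Bool) (lB : I.CloneB → Bool)
    (hW : I.TwoLevelWitness N N' lA lB) :
    (∀ T' : Finset (I.CloneA × I.CloneB),
      I.IsCloneMatching T' → (∀ e ∈ T', I.GNEdge N N' e.1 e.2) → I.wtTotal N' T' ≤ 0) ∧
    I.Popular N := by
  have weight_nonpos : ∀ T' : Finset (I.CloneA × I.CloneB),
      I.IsCloneMatching T' → (∀ e ∈ T', I.GNEdge N N' e.1 e.2) → I.wtTotal N' T' ≤ 0 :=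
    fun _ => hW.wtTotal_nonpos hN'.isCloneMatching
  exact ⟨weight_nonpos, PrefInstance.popular_of_wtTotal_nonpos hN hN' weight_nonpos⟩
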